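/- For each integer k ≥ 2 and all w, w', ζ: H_{2k}(w, w', 0, …, 0) = det_{i,j=0}^{k−2} ( H₄(w,w')·η_{i,j} + (ζ²−1)(η_{i−1,j} + η_{i,j−1} + (ζ²−1)ww'·η_{i−1,j−1}) ), where H₄(w,w') = 3 + ζ² + (ζ²−1)(w + w'), and where η_{i,j} = Σ_{n=⌈(i+j)/3⌉}^{min(i,j)} n!(3+ζ²)^{3n−(i+j)}(ζ²−1)^{i+j−2n} / ((i−n)!(j−n)!(3n−(i+j))!) for i,j ≥ 0, and η_{i,j} = 0 if i < 0 or j < 0. -/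

import Mathlib

noncomputable section

open Complex
open scoped BigOperators

/-- Jacobi theta function `ϑ₁(z|τ)` with nome `p = e^{iπτ}` (Whittaker–Watson convention). -/
def th1 (z τ : ℂ) : ℂ :=
  -Complex.I * ∑' n : ℤ, (-1 : ℂ) ^ n *
    Complex.exp ((Real.pi : ℂ) * Complex.I * τ * ((n : ℂ) + 1/2) ^ 2 + (2 * (n : ℂ) + 1) * Complex.I * z)

/-- Jacobi theta function `ϑ₂(z|τ)`. -/
def th2 (z τ : ℂ) : ℂ :=
  ∑' n : ℤ,
    Complex.exp ((Real.pi : ℂ) * Complex.I * τ * ((n : ℂ) + 1/2) ^ 2 + (2 * (n : ℂ) + 1) * Complex.I * z)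

/-- Jacobi theta function `ϑ₃(z|τ)`. -/
def th3 (z τ : ℂ) : ℂ :=
  ∑' n : ℤ, Complex.exp ((Real.pi : ℂ) * Complex.I * τ * (n : ℂ) ^ 2 + 2 * (n : ℂ) * Complex.I * z)

/-- Jacobi theta function `ϑ₄(z|τ)`. -/
def th4 (z τ : ℂ) : ℂ :=
  ∑' n : ℤ, (-1 : ℂ) ^ n *
    Complex.exp ((Real.pi : ℂ) * Complex.I * τ * (n : ℂ) ^ 2 + 2 * (n : ℂ) * Complex.I * z)

/-- The crossing parameter `η = π/3`. -/
def ηc : ℂ := (Real.pi : ℂ) / 3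

/-- The elliptic nome `p = e^{iπτ}`. -/
def pnome (τ : ℂ) : ℂ := Complex.exp ((Real.pi : ℂ) * Complex.I * τ)

/-- `ζ = (ϑ₁(η,p²)/ϑ₄(η,p²))²`. -/
def zet (τ : ℂ) : ℂ := (th1 ηc (2 * τ) / th4 ηc (2 * τ)) ^ 2

/-- The nome `p` is real with `0 < p < 1`. -/
def preal (τ : ℂ) : Prop := (pnome τ).im = 0 ∧ 0 < (pnome τ).re ∧ (pnome τ).re < 1

/-- A tuple given by a list of prescribed entries, padded by zeros. -/
def padded {n : ℕ} (l : List ℂ) : Fin n → ℂ := fun j => l.getD (j : ℕ) 0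

/-- Extension of a tuple by a list of prescribed further entries (padded by zeros). -/
def extL {m n : ℕ} (w : Fin m → ℂ) (l : List ℂ) : Fin n → ℂ :=
  fun j => if h : (j : ℕ) < m then w ⟨j, h⟩ else l.getD ((j : ℕ) - m) 0

/-- First `k` entries of a `2k`-tuple. -/
def firstHalf {k : ℕ} (x : Fin (2 * k) → ℂ) : Fin k → ℂ :=
  fun i => x ⟨(i : ℕ), by have := i.2; omega⟩

/-- Last `k` entries of a `2k`-tuple. -/
def secondHalf {k : ℕ} (x : Fin (2 * k) → ℂ) : Fin k → ℂ :=
  fun i => x ⟨k + (i : ℕ), by have := i.2; omega⟩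

/-- `𝕙(x,y) = ϑ₁(x−y+η)ϑ₁(x−y−η)ϑ₁(x+y+η)ϑ₁(x+y−η)`. -/
def hh (τ x y : ℂ) : ℂ :=
  th1 (x - y + ηc) τ * th1 (x - y - ηc) τ * th1 (x + y + ηc) τ * th1 (x + y - ηc) τ

/-- `𝔻(x₁,…,x_k) = ∏_{i<j} ϑ₁(x_j−x_i)ϑ₁(x_j+x_i)`. -/
def vdTheta (τ : ℂ) {k : ℕ} (y : Fin k → ℂ) : ℂ :=
  ∏ i : Fin k, ∏ j : Fin k, if i < j then th1 (y j - y i) τ * th1 (y j + y i) τ else 1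

/-- The elliptic Tsuchiya determinant `ℍ_{2k}(x₁,…,x_k; x_{k+1},…,x_{2k})`. -/
def tsuchiya (τ : ℂ) (k : ℕ) (x : Fin (2 * k) → ℂ) : ℂ :=
  (∏ i : Fin k, ∏ j : Fin k, hh τ (firstHalf x i) (secondHalf x j))
    / (vdTheta τ (firstHalf x) * vdTheta τ (secondHalf x))
    * Matrix.det (Matrix.of fun i j : Fin k => (hh τ (firstHalf x i) (secondHalf x j))⁻¹)

/-- The expression defining the elliptic Tsuchiya determinant is well defined:
the Vandermonde-type denominators and the entries `𝕙(x_i,x_{j+k})` are nonzero. -/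
def tsuDefined (τ : ℂ) (k : ℕ) (x : Fin (2 * k) → ℂ) : Prop :=
  (∀ i j : Fin k, i ≠ j →
    th1 (firstHalf x j - firstHalf x i) τ ≠ 0 ∧ th1 (firstHalf x j + firstHalf x i) τ ≠ 0) ∧
  (∀ i j : Fin k, i ≠ j →
    th1 (secondHalf x j - secondHalf x i) τ ≠ 0 ∧ th1 (secondHalf x j + secondHalf x i) τ ≠ 0) ∧
  (∀ i j : Fin k, hh τ (firstHalf x i) (secondHalf x j) ≠ 0)

/-- `h(w,w') = 1 − (3+ζ²)ww' + (1−ζ²)ww'(w+w')`. -/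
def hpol (ζ w w' : ℂ) : ℂ := 1 - (3 + ζ ^ 2) * w * w' + (1 - ζ ^ 2) * w * w' * (w + w')

/-- Vandermonde product `Δ(w₁,…,w_k) = ∏_{i<j}(w_j − w_i)`. -/
def vdm {k : ℕ} (y : Fin k → ℂ) : ℂ :=
  ∏ i : Fin k, ∏ j : Fin k, if i < j then y j - y i else 1

/-- The determinant-ratio expression defining the polynomial `H_{2k}`. -/
def Hratio (ζ : ℂ) (k : ℕ) (w : Fin (2 * k) → ℂ) : ℂ :=
  (∏ i : Fin k, ∏ j : Fin k, hpol ζ (firstHalf w i) (secondHalf w j))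
    / (vdm (firstHalf w) * vdm (secondHalf w))
    * Matrix.det (Matrix.of fun i j : Fin k => (hpol ζ (firstHalf w i) (secondHalf w j))⁻¹)

/-- The expression `Hratio` is well defined at `w`. -/
def HratioDefined (ζ : ℂ) (k : ℕ) (w : Fin (2 * k) → ℂ) : Prop :=
  (∀ i j : Fin k, i ≠ j → firstHalf w i ≠ firstHalf w j) ∧
  (∀ i j : Fin k, i ≠ j → secondHalf w i ≠ secondHalf w j) ∧
  (∀ i j : Fin k, hpol ζ (firstHalf w i) (secondHalf w j) ≠ 0)

/-- `H` is the family of Rosengren–Zinn-Justin polynomials `H_{2k}` for parameter `ζ`: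
for each `k`, `H k` is a polynomial function of the `2k` variables agreeing with the
determinant-ratio formula wherever the latter is defined, and `H 0 = 1`. -/
def IsHFamily (ζ : ℂ) (H : (k : ℕ) → (Fin (2 * k) → ℂ) → ℂ) : Prop :=
  (∀ w, H 0 w = 1) ∧
  (∀ k : ℕ, ∃ P : MvPolynomial (Fin (2 * k)) ℂ, ∀ w, H k w = MvPolynomial.eval w P) ∧
  (∀ (k : ℕ) (w : Fin (2 * k) → ℂ), HratioDefined ζ k w → H k w = Hratio ζ k w)

/-- Vertex weight `a(u)`. -/
def av (τ u : ℂ) : ℂ := th4 (2*ηc) (2*τ) * th1 (u + 2*ηc) (2*τ) * th4 u (2*τ)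
/-- Vertex weight `b(u)`. -/
def bv (τ u : ℂ) : ℂ := th4 (2*ηc) (2*τ) * th4 (u + 2*ηc) (2*τ) * th1 u (2*τ)
/-- Vertex weight `c(u)`. -/
def cv (τ u : ℂ) : ℂ := th1 (2*ηc) (2*τ) * th4 (u + 2*ηc) (2*τ) * th4 u (2*τ)
/-- Vertex weight `d(u)`. -/
def dv (τ u : ℂ) : ℂ := th1 (2*ηc) (2*τ) * th1 (u + 2*ηc) (2*τ) * th1 u (2*τ)
/-- `r(u) = a(u) + b(u)`. -/
def rv (τ u : ℂ) : ℂ := av τ u + bv τ u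

/-- Entries of the `R`-matrix of the eight-vertex model, in the basis `{↑↑,↑↓,↓↑,↓↓}`
identified with `Fin 2 × Fin 2` (`↑ = 0`, `↓ = 1`). -/
def Rent (τ u : ℂ) (p q : Fin 2 × Fin 2) : ℂ :=
  if p = q then (if p.1 = p.2 then av τ u else bv τ u)
  else if q = (p.2, p.1) then cv τ u
  else if p.1 = p.2 ∧ q.1 = q.2 then dv τ u
  else 0

/-- Entries of `Ř(u) = 𝒫 R(u)`. -/
def Rcheckent (τ u : ℂ) (p q : Fin 2 × Fin 2) : ℂ := Rent τ u (p.2, p.1) q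

/-- The boundary vector `χ(x) ∈ ℂ²⊗ℂ²`. -/
def chiV (τ lam x : ℂ) : Fin 2 × Fin 2 → ℂ := fun p =>
  if p = ((0 : Fin 2), (1 : Fin 2)) then th1 (x + lam) (2*τ) * th4 (x - lam - 2*ηc) (2*τ)
  else if p = ((1 : Fin 2), (0 : Fin 2)) then th1 (x - lam - 2*ηc) (2*τ) * th4 (x + lam) (2*τ)
  else 0

/-- The boundary vector `χ̄(x) ∈ ℂ²⊗ℂ²`. -/
def chibarV (τ lam x : ℂ) : Fin 2 × Fin 2 → ℂ := fun p =>
  if p = ((0 : Fin 2), (0 : Fin 2)) then th1 (x + lam) (2*τ) * th1 (x - lam - 2*ηc) (2*τ)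
  else if p = ((1 : Fin 2), (1 : Fin 2)) then th4 (x - lam - 2*ηc) (2*τ) * th4 (x + lam) (2*τ)
  else 0

/-- A family `Ψ_n(u₁,…,u_{2n+1}) ∈ (ℂ²)^{⊗(2n+1)}`, represented by its components
with respect to spin configurations `α : Fin (2n+1) → Fin 2` (`↑ = 0`, `↓ = 1`). -/
abbrev PsiFam := (n : ℕ) → (Fin (2 * n + 1) → ℂ) → (Fin (2 * n + 1) → Fin 2) → ℂ

/-- The action of `Ř(u)` on tensor factors `i`, `j` of `(ℂ²)^{⊗L}`. -/
def applyRc (τ u : ℂ) {L : ℕ} (i j : Fin L) (ψ : (Fin L → Fin 2) → ℂ) :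
    (Fin L → Fin 2) → ℂ := fun α =>
  ∑ s : Fin 2, ∑ t : Fin 2,
    Rcheckent τ u (α i, α j) (s, t) * ψ (Function.update (Function.update α i s) j t)

/-- Spin flip. -/
def flipS : Fin 2 → Fin 2 := fun s => if s = 0 then 1 else 0

/-- Components of the singlet `s = ↑↓ − ↓↑`. -/
def singletC : Fin 2 → Fin 2 → ℂ := fun s t =>
  if s = 0 ∧ t = 1 then 1 else if s = 1 ∧ t = 0 then -1 else 0

/-- Delete the entries at positions `i`, `i+1` from a tuple. -/
def delTwo {α : Type*} {n : ℕ} (i : ℕ) (u : Fin (2 * (n + 1) + 1) → α) : Fin (2 * n + 1) → α :=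
  fun j => if _h : (j : ℕ) < i then u ⟨j, by have := j.2; omega⟩
           else u ⟨(j : ℕ) + 2, by have := j.2; omega⟩

/-- The components of `Ψ_n` are entire functions of each `u_i`. -/
def PsiEntire (Ψ : PsiFam) : Prop :=
  ∀ (n : ℕ) (u : Fin (2*n+1) → ℂ) (i : Fin (2*n+1)) (α : Fin (2*n+1) → Fin 2),
    Differentiable ℂ fun z => Ψ n (Function.update u i z) α

/-- (P1): the exchange relations. -/
def PsiP1 (τ : ℂ) (Ψ : PsiFam) : Prop :=
  ∀ (n : ℕ) (u : Fin (2*n+1) → ℂ) (i j : Fin (2*n+1)), (j : ℕ) = (i : ℕ) + 1 →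
    applyRc τ (u j - u i) i j (Ψ n u)
      = fun α => rv τ (u j - u i) * Ψ n (fun l => u (Equiv.swap i j l)) α

/-- (P2): local spin flips. -/
def PsiP2 (τ : ℂ) (Ψ : PsiFam) : Prop :=
  ∀ (n : ℕ) (u : Fin (2*n+1) → ℂ) (i : Fin (2*n+1)) (α : Fin (2*n+1) → Fin 2),
    Ψ n u (Function.update α i (flipS (α i)))
      = (-(pnome τ)) ^ n * Complex.exp (-Complex.I * ∑ j, (u j - u i))
        * Ψ n (Function.update u i (u i + Real.pi * τ)) α

/-- (P3): quasi-periodicity of `Ψ_n` in each `u_i`. -/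
def PsiP3 (τ : ℂ) (Ψ : PsiFam) : Prop :=
  ∀ (n : ℕ) (u : Fin (2*n+1) → ℂ) (i : Fin (2*n+1)),
    (Ψ n (Function.update u i (u i + Real.pi))
      = fun α => (∏ j ∈ Finset.univ.erase i, (if α j = 0 then (1:ℂ) else -1)) * Ψ n u α) ∧
    (Ψ n (Function.update u i (u i + 2 * Real.pi * τ))
      = fun α => (pnome τ ^ (4*n))⁻¹ *
          Complex.exp (-2 * Complex.I * ∑ j, (u i - u j)) * Ψ n u α)

/-- (P4): the wheel condition. -/
def PsiP4 (Ψ : PsiFam) : Prop :=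
  ∀ (n : ℕ) (u : Fin (2*n+1) → ℂ),
    (∃ i j k : Fin (2*n+1), i < j ∧ j < k ∧ u j = u i + 2*ηc ∧ u k = u i + 4*ηc) →
    Ψ n u = 0

/-- (P5): the reduction relations. -/
def PsiP5 (τ : ℂ) (Ψ : PsiFam) : Prop :=
  ∀ (n : ℕ) (u : Fin (2*(n+1)+1) → ℂ) (i : ℕ) (hi : i + 1 < 2*(n+1)+1),
    u ⟨i+1, hi⟩ = u ⟨i, by omega⟩ + 2*ηc →
    Ψ (n+1) u = fun α =>
      (∏ j ∈ (Finset.univ.erase (⟨i, by omega⟩ : Fin (2*(n+1)+1))).erase ⟨i+1, hi⟩,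
          th1 (u ⟨i, by omega⟩ - u j - 2*ηc) τ)
        * singletC (α ⟨i, by omega⟩) (α ⟨i+1, hi⟩)
        * Ψ n (delTwo i u) (delTwo i α)

/-- (P6): `Ψ₀ = ↑ + ↓`. -/
def PsiP6 (Ψ : PsiFam) : Prop := ∀ u α, Ψ 0 u α = 1

/-- The inhomogeneity parameters `(x₁,−x₁,…,x_n,−x_n,0)`. -/
def interleave {n : ℕ} (x : Fin n → ℂ) : Fin (2*n+1) → ℂ := fun j =>
  if h : (j : ℕ) < 2*n then
    (if (j : ℕ) % 2 = 0 then x ⟨(j:ℕ)/2, by omega⟩ else -x ⟨(j:ℕ)/2, by omega⟩)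
  else 0

/-- Components of `χ(x)`. -/
def chiC (τ lam x : ℂ) (s t : Fin 2) : ℂ :=
  if s = 0 ∧ t = 1 then th1 (x + lam) (2*τ) * th4 (x - lam - 2*ηc) (2*τ)
  else if s = 1 ∧ t = 0 then th1 (x - lam - 2*ηc) (2*τ) * th4 (x + lam) (2*τ)
  else 0

/-- Components of `χ̄(x)`. -/
def chibarC (τ lam x : ℂ) (s t : Fin 2) : ℂ :=
  if s = 0 ∧ t = 0 then th1 (x + lam) (2*τ) * th1 (x - lam - 2*ηc) (2*τ)
  else if s = 1 ∧ t = 1 then th4 (x - lam - 2*ηc) (2*τ) * th4 (x + lam) (2*τ)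
  else 0

/-- The scalar product `Z_n(x₁,…,x_n) = ⟨ξ_n(x₁,…,x_n), Ψ_n(x₁,−x₁,…,x_n,−x_n,0)⟩`. -/
def Zfun (τ lam : ℂ) (Ψ : PsiFam) (n : ℕ) (x : Fin n → ℂ) : ℂ :=
  ∑ α : Fin (2*n+1) → Fin 2,
    (∏ m : Fin n, chiC τ lam (x m)
        (α ⟨2*(m:ℕ), by have := m.2; omega⟩) (α ⟨2*(m:ℕ)+1, by have := m.2; omega⟩))
      * (if α ⟨2*n, by omega⟩ = 0 then (1:ℂ) else 0)
      * Ψ n (interleave x) α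

/-- The scalar product `Z̄_n^±(x₁,…,x_n)`, with `ε = ±1`. -/
def Zbarfun (τ lam ε : ℂ) (Ψ : PsiFam) (n : ℕ) (x : Fin n → ℂ) : ℂ :=
  ∑ α : Fin (2*n+1) → Fin 2,
    (∏ m : Fin n, chibarC τ lam (x m)
        (α ⟨2*(m:ℕ), by have := m.2; omega⟩) (α ⟨2*(m:ℕ)+1, by have := m.2; omega⟩))
      * (if α ⟨2*n, by omega⟩ = 0 then (1:ℂ) else ε)
      * Ψ n (interleave x) α

/-- The normalisation constant `𝒩_n`. -/
def Ncoef (τ : ℂ) (n : ℕ) : ℂ :=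
  (-1 : ℂ) ^ ((n+1)/2) * (th1 ηc τ ^ (n^2))⁻¹ * (th4 0 (2*τ) / th4 ηc (2*τ)) ^ (n*(n+1)/2)

/-- The vector `ψ_n = 𝒩_n Ψ_n(0,…,0)`. -/
def psiH (τ : ℂ) (Ψ : PsiFam) (n : ℕ) (α : Fin (2*n+1) → Fin 2) : ℂ :=
  Ncoef τ n * Ψ n (fun _ => 0) α

/-- The scalar product `S_n(μ) = ((⟨↑↓| + μ⟨↓↑|)^{⊗n} ⊗ ⟨↑|) ψ_n`. -/
def Sfun (τ : ℂ) (Ψ : PsiFam) (n : ℕ) (μ : ℂ) : ℂ :=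
  ∑ α : Fin (2*n+1) → Fin 2,
    (∏ m : Fin n,
      (if α ⟨2*(m:ℕ), by have := m.2; omega⟩ = 0 ∧ α ⟨2*(m:ℕ)+1, by have := m.2; omega⟩ = 1
        then (1:ℂ)
       else if α ⟨2*(m:ℕ), by have := m.2; omega⟩ = 1 ∧ α ⟨2*(m:ℕ)+1, by have := m.2; omega⟩ = 0
        then μ
       else 0))
      * (if α ⟨2*n, by omega⟩ = 0 then (1:ℂ) else 0) * psiH τ Ψ n α

/-- The scalar product `S̄_n^±(ν) = ((⟨↑↑| + ν⟨↓↓|)^{⊗n} ⊗ (⟨↑| ± ⟨↓|)) ψ_n`, with `ε = ±1`. -/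
def Sbarfun (τ ε : ℂ) (Ψ : PsiFam) (n : ℕ) (ν : ℂ) : ℂ :=
  ∑ α : Fin (2*n+1) → Fin 2,
    (∏ m : Fin n,
      (if α ⟨2*(m:ℕ), by have := m.2; omega⟩ = 0 ∧ α ⟨2*(m:ℕ)+1, by have := m.2; omega⟩ = 0
        then (1:ℂ)
       else if α ⟨2*(m:ℕ), by have := m.2; omega⟩ = 1 ∧ α ⟨2*(m:ℕ)+1, by have := m.2; omega⟩ = 1
        then ν
       else 0))
      * (if α ⟨2*n, by omega⟩ = 0 then (1:ℂ) else ε) * psiH τ Ψ n α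

/-- The alternating spin configuration `↑↓↑↓⋯↑`. -/
def altConf {L : ℕ} : Fin L → Fin 2 := fun j => if (j : ℕ) % 2 = 0 then 0 else 1

/-- The fully polarised spin configuration `↓⋯↓`. -/
def downConf {L : ℕ} : Fin L → Fin 2 := fun _ => 1

/-- The spin configuration `↑⋯↑↓` with a single `↓` at the last site. -/
def lastDownConf {n : ℕ} : Fin (2*n+1) → Fin 2 := fun j => if (j : ℕ) = 2*n then 1 else 0

/-- `J₂ = −1/2`. -/
def J2c : ℂ := -(1/2)
/-- `J₃ = 1/(1+ζ)`. -/
def J3c (ζ : ℂ) : ℂ := 1/(1+ζ)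
/-- `J₄ = 1/(1−ζ)`. -/
def J4c (ζ : ℂ) : ℂ := 1/(1-ζ)
/-- `μ̄ = (μ−1)²/((ζ²−1)μ)`. -/
def mubar (ζ μ : ℂ) : ℂ := (μ - 1)^2 / ((ζ^2 - 1)*μ)
/-- `ν̄ = (ν−ζ)(νζ−1)/((ζ²−1)ν)`. -/
def nubar (ζ ν : ℂ) : ℂ := (ν - ζ)*(ν*ζ - 1) / ((ζ^2 - 1)*ν)

/-- The elliptic function `w(x)`. -/
def wfun (τ x : ℂ) : ℂ :=
  th4 ηc (2*τ) / th4 0 (2*τ) * th1 x τ ^ 2 / (th1 (x - ηc) τ * th1 (x + ηc) τ)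

/-- `β₂ = η + π/2`. -/
def β2c : ℂ := ηc + (Real.pi : ℂ)/2
/-- `β₃ = η + π/2 + πτ/2`. -/
def β3c (τ : ℂ) : ℂ := ηc + (Real.pi : ℂ)/2 + (Real.pi : ℂ)*τ/2
/-- `β₄ = η + πτ/2`. -/
def β4c (τ : ℂ) : ℂ := ηc + (Real.pi : ℂ)*τ/2

/-- `f` is an (even) theta function of degree `m`, nome `p = e^{iπτ}` and norm `0`
with respect to each of its variables. -/
def ThetaLike (τ : ℂ) (m : ℕ) {n : ℕ} (X : (Fin n → ℂ) → ℂ) : Prop :=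
  ∀ (x : Fin n → ℂ) (i : Fin n),
    Differentiable ℂ (fun z => X (Function.update x i z)) ∧
    (∀ z, X (Function.update x i (z + Real.pi)) = X (Function.update x i z)) ∧
    (∀ z, X (Function.update x i (z + Real.pi * τ))
        = ((-(pnome τ)) ^ m)⁻¹ * Complex.exp (-2 * Complex.I * ((m : ℂ) * z))
            * X (Function.update x i z)) ∧
    (∀ z, X (Function.update x i (-z)) = X (Function.update x i z))



/-- the coefficients η_{i,j} of STATEMENT 3 -/
def etaCoef (ζ : ℂ) (i j : ℤ) : ℂ :=
  if i < 0 ∨ j < 0 then 0 else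
    ∑ n ∈ Finset.Icc ((i.toNat + j.toNat + 2)/3) (min i.toNat j.toNat),
      (n.factorial : ℂ) * (3 + ζ^2) ^ (3*n - (i.toNat + j.toNat))
        * (ζ^2 - 1) ^ (i.toNat + j.toNat - 2*n)
        / (((i.toNat - n).factorial : ℂ) * ((j.toNat - n).factorial : ℂ)
            * ((3*n - (i.toNat + j.toNat)).factorial : ℂ))

/-!
Eliminating one variable `u` of the first half and one variable `v` of the second half by a Schur
complement turns the determinant ratio for `1 / h` into a smaller one for `H₄(u, v, ·, ·) / h`. The
result is symmetric in `u` and `v`, so that the heads of the two halves may be exchanged; hence `w`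
and `w'`, which both lie in the first half of `(w, w', 0, …, 0)`, can play the roles of `u` and `v`.

Let the other variables tend to zero as `t • s` with pairwise distinct entries of `s`. The two
Vandermonde determinants then turn the remaining ratio into the determinant of Taylor coefficients
of `H₄(w, w', ·, ·) / h` at the origin, and the geometric series
`1 / h(x, y) = ∑ₙ (x y)ⁿ (3 + ζ² + (ζ² - 1)(x + y))ⁿ` identifies those of `1 / h` with the `η i j`.
The assumptions `w ≠ w'` and `h(w, w') ≠ 0` made on the way are removed by density.
-/

section DetRatio

open Matrix

variable {K : Type*} [Field K] {m : ℕ}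

/-- The ratio `det (f (xᵢ, yⱼ)) / (Δ(x) Δ(y))`, with the junk value `0` if two of the `xᵢ` or two of
the `yⱼ` coincide. -/
def detRatio (f : K → K → K) (x y : Fin m → K) : K :=
  det (of fun i j => f (x i) (y j)) / ((vandermonde x).det * (vandermonde y).det)

theorem detRatio_comp_perm (f : K → K → K) (σ : Equiv.Perm (Fin m)) (x y : Fin m → K) :
    detRatio f (x ∘ σ) y = detRatio f x y := by
  have hnum : det (of fun i j => f ((x ∘ σ) i) (y j))
      = Equiv.Perm.sign σ * det (of fun i j => f (x i) (y j)) :=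
    det_permute σ (of fun i j => f (x i) (y j))
  have hden : (vandermonde (x ∘ σ)).det = Equiv.Perm.sign σ * (vandermonde x).det :=
    det_permute σ (vandermonde x)
  have hsign : ((Equiv.Perm.sign σ : ℤ) : K) ≠ 0 :=
    ((Equiv.Perm.sign σ).isUnit.map (Int.castRingHom K)).ne_zero
  rw [detRatio, detRatio, hnum, hden, mul_assoc, mul_div_mul_left _ _ hsign]

theorem det_vandermonde_vecCons (u : K) (x : Fin m → K) :
    (vandermonde (vecCons u x)).det = (∏ i, (x i - u)) * (vandermonde x).det := by
  simp [det_vandermonde, Fin.prod_univ_succ]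

theorem det_eq_pivot_mul_det (A : Matrix (Fin (m + 1)) (Fin (m + 1)) K) (h : A 0 0 ≠ 0) :
    A.det = A 0 0 * det (of fun i j : Fin m =>
      A i.succ j.succ - A i.succ 0 / A 0 0 * A 0 j.succ) := by
  let c : Fin (m + 1) → K := vecCons 0 fun i => A i.succ 0 / A 0 0
  let B : Matrix (Fin (m + 1)) (Fin (m + 1)) K := of fun i j => A i j - c i * A 0 j
  have hAB : A.det = B.det :=
    det_eq_of_forall_row_eq_smul_add_const c 0 rfl fun i j => by simp [B, c]
  have hB₀ : B 0 0 = A 0 0 := by simp [B, c]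
  have hB : ∀ i : Fin m, B i.succ 0 = 0 := fun i => by simp [B, c, h]
  rw [hAB, det_succ_column_zero, Fin.sum_univ_succ, hB₀]
  simp only [hB, mul_zero, zero_mul, Finset.sum_const_zero, add_zero, Fin.val_zero, pow_zero,
    one_mul]
  rfl

theorem detRatio_vecCons {f g : K → K → K} {u v : K} {x y a b : Fin m → K} (huv : f u v ≠ 0)
    (hx : ∀ i, x i ≠ u) (hy : ∀ j, y j ≠ v)
    (hfg : ∀ i j, f (x i) (y j) - f (x i) v / f u v * f u (y j)
      = (x i - u) * a i * ((y j - v) * b j * g (x i) (y j))) :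
    detRatio f (vecCons u x) (vecCons v y)
      = f u v * (∏ i, a i) * (∏ j, b j) * detRatio g x y := by
  have hdet : det (of fun i j => f (vecCons u x i) (vecCons v y j))
      = f u v * ((∏ i, (x i - u) * a i) * ((∏ j, (y j - v) * b j)
        * det (of fun i j => g (x i) (y j)))) := by
    rw [det_eq_pivot_mul_det _ huv, ← det_mul_row, ← det_mul_column]
    simp only [of_apply, cons_val_zero, cons_val_succ, hfg]
  have hx₀ : ∏ i, (x i - u) ≠ 0 := Finset.prod_ne_zero_iff.mpr fun i _ => sub_ne_zero.mpr (hx i)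
  have hy₀ : ∏ j, (y j - v) ≠ 0 := Finset.prod_ne_zero_iff.mpr fun j _ => sub_ne_zero.mpr (hy j)
  rw [detRatio, detRatio, hdet, det_vandermonde_vecCons, det_vandermonde_vecCons,
    Finset.prod_mul_distrib, Finset.prod_mul_distrib, ← mul_div_assoc,
    ← mul_div_mul_left _ ((vandermonde x).det * (vandermonde y).det) (mul_ne_zero hx₀ hy₀)]
  congr 1 <;> ring

end DetRatio

section InterpCoeff

open Matrix

variable {K : Type*} [Field K] {m : ℕ}

/-- The matrix of coefficients, in the monomials `Xᵃ Yᵇ` with `a, b < m`, of the polynomial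
interpolating `f` on the grid of the points `(xᵢ, yⱼ)`. -/
def interpCoeff (f : K → K → K) (x y : Fin m → K) : Matrix (Fin m) (Fin m) K :=
  (vandermonde x)⁻¹ * of (fun i j => f (x i) (y j)) * ((vandermonde y)⁻¹)ᵀ

theorem interpCoeff_apply (f : K → K → K) (x y : Fin m → K) (a b : Fin m) :
    interpCoeff f x y a b
      = ∑ i, ∑ j, (vandermonde x)⁻¹ a i * (vandermonde y)⁻¹ b j * f (x i) (y j) := by
  simp only [interpCoeff, mul_apply, of_apply, transpose_apply, Finset.sum_mul]
  rw [Finset.sum_comm]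
  exact Finset.sum_congr rfl fun i _ => Finset.sum_congr rfl fun j _ => by ring

theorem interpCoeff_add (f g : K → K → K) (x y : Fin m → K) :
    interpCoeff (f + g) x y = interpCoeff f x y + interpCoeff g x y := by
  ext a b
  simp only [interpCoeff_apply, Matrix.add_apply, Pi.add_apply, mul_add, Finset.sum_add_distrib]

theorem interpCoeff_mul_apply (c : K) (f g : K → K) (x y : Fin m → K) (a b : Fin m) :
    interpCoeff (fun u v => c * f u * g v) x y a b
      = c * (∑ i, (vandermonde x)⁻¹ a i * f (x i)) * ∑ j, (vandermonde y)⁻¹ b j * g (y j) := by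
  rw [interpCoeff_apply, mul_assoc, Finset.sum_mul_sum, Finset.mul_sum]
  refine Finset.sum_congr rfl fun i _ => ?_
  rw [Finset.mul_sum]
  exact Finset.sum_congr rfl fun j _ => by ring

theorem det_interpCoeff (f : K → K → K) (x y : Fin m → K) :
    (interpCoeff f x y).det = detRatio f x y := by
  simp only [interpCoeff, detRatio, det_mul, det_transpose, det_nonsing_inv, Ring.inverse_eq_inv',
    div_eq_mul_inv, mul_inv]
  ring

theorem sum_inv_vandermonde_mul_pow {s : Fin m → K} (hs : Function.Injective s) (a : Fin m)
    {p : ℕ} (hp : p < m) :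
    ∑ i, (vandermonde s)⁻¹ a i * s i ^ p = if p = a then 1 else 0 := by
  have hdet : IsUnit (vandermonde s).det := (det_vandermonde_ne_zero_iff.mpr hs).isUnit
  have hinv := congrFun (congrFun (nonsing_inv_mul _ hdet) a) ⟨p, hp⟩
  simpa [mul_apply, vandermonde_apply, one_apply, Fin.ext_iff, eq_comm] using hinv

theorem inv_vandermonde_smul_apply {t : K} (ht : t ≠ 0) (s : Fin m → K) (a i : Fin m) :
    (vandermonde (t • s))⁻¹ a i = (t ^ (a : ℕ))⁻¹ * (vandermonde s)⁻¹ a i := by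
  have hmul : vandermonde (t • s) = vandermonde s * diagonal fun a : Fin m => t ^ (a : ℕ) := by
    ext i a
    simp [vandermonde_apply, mul_diagonal, mul_pow, mul_comm]
  have hinv : (diagonal fun a : Fin m => t ^ (a : ℕ))⁻¹
      = diagonal fun a : Fin m => (t ^ (a : ℕ))⁻¹ :=
    inv_eq_left_inv (by simp [diagonal_mul_diagonal, ht])
  rw [hmul, Matrix.mul_inv_rev, hinv, diagonal_mul]

end InterpCoeff

section Limit

open Matrix Filter Topology Asymptotics
open scoped Polynomial.Bivariate

variable {𝕜 : Type*} [NormedField 𝕜] {m : ℕ}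

theorem tendsto_sum_inv_vandermonde_smul_mul_pow {s : Fin m → 𝕜} (hs : Function.Injective s)
    (a : Fin m) (p : ℕ) :
    Tendsto (fun t : 𝕜 => ∑ i, (vandermonde (t • s))⁻¹ a i * (t • s) i ^ p) (𝓝[≠] 0)
      (𝓝 (if p = a then 1 else 0)) := by
  rcases lt_or_ge p m with hp | hp
  · refine tendsto_const_nhds.congr' ?_
    filter_upwards [self_mem_nhdsWithin] with t ht
    exact (sum_inv_vandermonde_mul_pow ((mul_right_injective₀ ht).comp hs) a hp).symm
  · have hap : p - a ≠ 0 := Nat.sub_ne_zero_of_lt (a.2.trans_le hp)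
    have hlim : Tendsto (fun t : 𝕜 => t ^ (p - a) * ∑ i, (vandermonde s)⁻¹ a i * s i ^ p)
        (𝓝[≠] 0) (𝓝 0) := by
      refine Continuous.tendsto' (by fun_prop) _ _ ?_ |>.mono_left nhdsWithin_le_nhds
      rw [zero_pow hap, zero_mul]
    rw [if_neg (a.2.trans_le hp).ne']
    refine hlim.congr' ?_
    filter_upwards [self_mem_nhdsWithin] with t ht
    rw [pow_sub₀ t ht (a.2.le.trans hp), Finset.mul_sum]
    refine Finset.sum_congr rfl fun i _ => ?_
    rw [inv_vandermonde_smul_apply ht, Pi.smul_apply, smul_eq_mul, mul_pow]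
    ring

theorem tendsto_interpCoeff_evalEval {s s' : Fin m → 𝕜} (hs : Function.Injective s)
    (hs' : Function.Injective s') (Q : 𝕜[X][Y]) :
    Tendsto (fun t : 𝕜 => interpCoeff (fun x y => Q.evalEval x y) (t • s) (t • s')) (𝓝[≠] 0)
      (𝓝 (of fun a b : Fin m => (Q.coeff b).coeff a)) := by
  induction Q using Polynomial.induction_on' with
  | add Q R hQ hR =>
    convert hQ.add hR using 1
    · ext1 t
      rw [← interpCoeff_add]
      simp only [Polynomial.evalEval_add, Pi.add_def]
    · exact congrArg 𝓝 (by ext a b; simp)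
  | monomial q P =>
    induction P using Polynomial.induction_on' with
    | add P R hP hR =>
      convert hP.add hR using 1
      · ext1 t
        rw [← interpCoeff_add]
        simp only [map_add, Polynomial.evalEval_add, Pi.add_def]
      · exact congrArg 𝓝 (by ext a b; simp)
    | monomial p c =>
      refine tendsto_pi_nhds.mpr fun a => tendsto_pi_nhds.mpr fun b => ?_
      have hQ : ∀ x y, (Polynomial.monomial q (Polynomial.monomial p c)).evalEval x y
          = c * x ^ p * y ^ q := fun x y => by
        simp [Polynomial.evalEval]
      simp only [hQ, interpCoeff_mul_apply c (· ^ p) (· ^ q)]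
      convert ((tendsto_sum_inv_vandermonde_smul_mul_pow hs a p).const_mul c).mul
        (tendsto_sum_inv_vandermonde_smul_mul_pow hs' b q) using 2
      rcases eq_or_ne q b with hq | hq <;> simp [Polynomial.coeff_monomial, hq]

theorem tendsto_interpCoeff_of_isLittleO (s s' : Fin (m + 1) → 𝕜) {R : 𝕜 → 𝕜 → 𝕜}
    (hR : (fun z : 𝕜 × 𝕜 => R z.1 z.2) =o[𝓝 0] fun z => ‖z‖ ^ (2 * m)) :
    Tendsto (fun t : 𝕜 => interpCoeff R (t • s) (t • s')) (𝓝[≠] 0) (𝓝 0) := by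
  have hR_smul : ∀ i j, (fun t : 𝕜 => R (t * s i) (t * s' j)) =o[𝓝[≠] 0] fun t => t ^ (2 * m) := by
    intro i j
    have hcurve : Tendsto (fun t : 𝕜 => (t * s i, t * s' j)) (𝓝[≠] 0) (𝓝 0) :=
      Continuous.tendsto' (by fun_prop) _ _ (by simp) |>.mono_left nhdsWithin_le_nhds
    refine (hR.comp_tendsto hcurve).trans_isBigO (.of_bound (‖(s i, s' j)‖ ^ (2 * m)) ?_)
    refine .of_forall fun t => le_of_eq ?_
    have hnorm : ‖(t * s i, t * s' j)‖ = ‖t‖ * ‖(s i, s' j)‖ := norm_smul t (s i, s' j)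
    simp only [Function.comp_apply, hnorm, norm_pow, norm_mul, norm_norm, mul_pow]
    ring
  refine tendsto_pi_nhds.mpr fun a => tendsto_pi_nhds.mpr fun b => ?_
  have hterm : ∀ i j, Tendsto (fun t : 𝕜 => (vandermonde s)⁻¹ a i * (vandermonde s')⁻¹ b j
      * (R (t * s i) (t * s' j) / t ^ ((a : ℕ) + b))) (𝓝[≠] 0) (𝓝 0) := by
    intro i j
    have hpow : (fun t : 𝕜 => t ^ (2 * m)) =O[𝓝[≠] 0] fun t => t ^ ((a : ℕ) + b) := by
      rcases (show (a : ℕ) + b ≤ 2 * m by omega).eq_or_lt with hab | hab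
      · exact hab ▸ isBigO_refl _ _
      · exact (isLittleO_pow_pow hab).isBigO.mono nhdsWithin_le_nhds
    simpa using ((hR_smul i j).trans_isBigO hpow).tendsto_div_nhds_zero.const_mul _
  have hsum := tendsto_finsetSum Finset.univ fun i _ =>
    tendsto_finsetSum Finset.univ fun j _ => hterm i j
  simp only [Finset.sum_const_zero] at hsum
  refine hsum.congr' ?_
  filter_upwards [self_mem_nhdsWithin] with t ht
  rw [interpCoeff_apply]
  refine Finset.sum_congr rfl fun i _ => Finset.sum_congr rfl fun j _ => ?_
  simp only [inv_vandermonde_smul_apply ht, Pi.smul_apply, smul_eq_mul, pow_add, div_eq_mul_inv,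
    mul_inv]
  ring

theorem tendsto_detRatio {s s' : Fin (m + 1) → 𝕜} (hs : Function.Injective s)
    (hs' : Function.Injective s') {f : 𝕜 → 𝕜 → 𝕜} {Q : 𝕜[X][Y]}
    (hf : (fun z : 𝕜 × 𝕜 => f z.1 z.2 - Q.evalEval z.1 z.2) =o[𝓝 0] fun z => ‖z‖ ^ (2 * m)) :
    Tendsto (fun t : 𝕜 => detRatio f (t • s) (t • s')) (𝓝[≠] 0)
      (𝓝 (det (of fun a b : Fin (m + 1) => (Q.coeff b).coeff a))) := by
  have hlim := (tendsto_interpCoeff_evalEval hs hs' Q).add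
    (tendsto_interpCoeff_of_isLittleO s s' (R := fun x y => f x y - Q.evalEval x y) hf)
  simp only [← interpCoeff_add, add_zero] at hlim
  have hdet := (continuous_id.matrix_det.tendsto _).comp hlim
  simpa only [Function.comp_def, id, det_interpCoeff, Pi.add_def, add_sub_cancel] using hdet

end Limit

section GeometricSeries

open Polynomial Asymptotics Filter Topology
open scoped Polynomial.Bivariate

theorem coeff_C_mul_X_add_C_pow {R : Type*} [CommSemiring R] (a b : R) (n k : ℕ) :
    ((C a * X + C b) ^ n).coeff k = n.choose k * a ^ k * b ^ (n - k) := by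
  have hcomp : (C a * X + C b) ^ n = ((X + C b) ^ n).comp (C a * X) := by simp
  rw [hcomp, comp_C_mul_X_coeff, coeff_X_add_C_pow]
  ring

theorem coeff_coeff_linear_pow {R : Type*} [CommSemiring R] (α β : R) (n p q : ℕ) :
    (((C (C β) * Y + C (C β * X + C α)) ^ n).coeff q).coeff p
      = n.choose q * (n - q).choose p * β ^ (p + q) * α ^ (n - q - p) := by
  rw [coeff_C_mul_X_add_C_pow, ← C_pow, ← C_eq_natCast, ← C_mul, coeff_C_mul,
    coeff_C_mul_X_add_C_pow]
  ring

theorem choose_mul_choose_eq_div (K : Type*) [Field K] [CharZero K] {n p q : ℕ}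
    (h : p + q ≤ n) :
    (n.choose q * (n - q).choose p : K)
      = n.factorial / (p.factorial * q.factorial * (n - q - p).factorial) := by
  rw [Nat.cast_choose K (by omega), Nat.cast_choose K (by omega)]
  have hfac : ((n - q).factorial : K) ≠ 0 := Nat.cast_ne_zero.mpr (Nat.factorial_ne_zero _)
  field_simp

/-- The partial sum of the geometric series `1 / h = ∑ (1 - h)ⁿ`, as a polynomial in the two
variables of `h`; here `1 - h(w, w') = w w' (3 + ζ² + (ζ² - 1)(w + w'))`. -/
def geomPoly (ζ : ℂ) (N : ℕ) : ℂ[X][Y] :=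
  ∑ n ∈ Finset.range N,
    (C X * Y * (C (C (ζ ^ 2 - 1)) * Y + C (C (ζ ^ 2 - 1) * X + C (3 + ζ ^ 2)))) ^ n

theorem coeff_coeff_geomPoly (ζ : ℂ) {N a : ℕ} (ha : a < N) (b : ℕ) :
    ((geomPoly ζ N).coeff b).coeff a = etaCoef ζ a b := by
  have hterm : ∀ n, (((C X * Y * (C (C (ζ ^ 2 - 1)) * Y
        + C (C (ζ ^ 2 - 1) * X + C (3 + ζ ^ 2)))) ^ n).coeff b).coeff a
      = if n ≤ a ∧ n ≤ b then (n.choose (b - n) * (n - (b - n)).choose (a - n) : ℂ)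
          * (ζ ^ 2 - 1) ^ (a - n + (b - n)) * (3 + ζ ^ 2) ^ (n - (b - n) - (a - n)) else 0 := by
    intro n
    rw [mul_pow, mul_pow, ← C_pow, mul_assoc, coeff_C_mul, coeff_X_pow_mul', coeff_X_pow_mul',
      ite_and]
    split_ifs
    exacts [coeff_coeff_linear_pow _ _ _ _ _, coeff_zero _, rfl]
  simp only [geomPoly, finsetSum_coeff, hterm]
  rw [etaCoef, if_neg (by omega), Int.toNat_natCast, Int.toNat_natCast]
  refine (Finset.sum_subset_zero_on_sdiff (fun n hn => ?_) (fun n hn => ?_) fun n hn => ?_).symm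
  · rw [Finset.mem_Icc] at hn
    exact Finset.mem_range.mpr (by omega)
  · rw [Finset.mem_sdiff, Finset.mem_Icc] at hn
    split_ifs with hab
    · rcases lt_or_ge n (b - n) with hb | hb
      · rw [Nat.choose_eq_zero_of_lt hb]
        simp
      · rw [Nat.choose_eq_zero_of_lt (show n - (b - n) < a - n by omega)]
        simp
    · rfl
  · rw [Finset.mem_Icc] at hn
    rw [if_pos (by omega), choose_mul_choose_eq_div ℂ (by omega),
      show a - n + (b - n) = a + b - 2 * n by omega,
      show n - (b - n) - (a - n) = 3 * n - (a + b) by omega]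
    ring

theorem coeff_coeff_monomial_mul_geomPoly (ζ : ℂ) {N a : ℕ} (ha : a < N) (b p q : ℕ) :
    ((C X ^ p * Y ^ q * geomPoly ζ N).coeff b).coeff a = etaCoef ζ (a - p) (b - q) := by
  rw [← C_pow, mul_assoc, coeff_C_mul, coeff_X_pow_mul', coeff_X_pow_mul']
  split_ifs with hp hq
  · rw [coeff_coeff_geomPoly ζ (by omega), Nat.cast_sub hp, Nat.cast_sub hq]
  · rw [coeff_zero, etaCoef, if_pos (by omega)]
  · rw [etaCoef, if_pos (by omega)]

theorem hpol_eq_one_sub (ζ x y : ℂ) :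
    hpol ζ x y = 1 - x * y * ((ζ ^ 2 - 1) * y + ((ζ ^ 2 - 1) * x + (3 + ζ ^ 2))) := by
  rw [hpol]
  ring

theorem hpol_mul_evalEval_geomPoly (ζ : ℂ) (N : ℕ) (x y : ℂ) :
    hpol ζ x y * (geomPoly ζ N).evalEval x y
      = 1 - (x * y * ((ζ ^ 2 - 1) * y + ((ζ ^ 2 - 1) * x + (3 + ζ ^ 2)))) ^ N := by
  rw [hpol_eq_one_sub, ← mul_neg_geom_sum, geomPoly, evalEval_finsetSum]
  simp only [evalEval_pow, evalEval_mul, evalEval_add, evalEval_C, evalEval_X, eval_X, eval_add,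
    eval_mul, eval_C]

/-- The symmetric polynomial `H₄` in four variables; `hfour ζ w w' 0 0` is the `H₄(w, w')` of the
theorem. -/
def hfour (ζ u v x y : ℂ) : ℂ :=
  3 + ζ ^ 2 + (ζ ^ 2 - 1) * (u + v) + (ζ ^ 2 - 1) * (x + y) + (ζ ^ 2 - 1) ^ 2 * u * v * (x * y)

/-- A polynomial in `(x, y)` which agrees with `H₄(u, v, x, y) / h(x, y)` up to terms divisible by
`(x y)ᴺ`. -/
def hfourGeomPoly (ζ u v : ℂ) (N : ℕ) : ℂ[X][Y] :=
  (C (C (3 + ζ ^ 2 + (ζ ^ 2 - 1) * (u + v))) + C (C (ζ ^ 2 - 1)) * (C X + Y)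
    + C (C ((ζ ^ 2 - 1) ^ 2 * u * v)) * (C X * Y)) * geomPoly ζ N

/-- The coefficient of `xⁱ yʲ` in the Taylor series of `H₄(u, v, x, y) / h(x, y)` at the origin,
taken to be zero for negative indices. -/
def hfourCoef (ζ u v : ℂ) (i j : ℤ) : ℂ :=
  (3 + ζ ^ 2 + (ζ ^ 2 - 1) * (u + v)) * etaCoef ζ i j
    + (ζ ^ 2 - 1) * (etaCoef ζ (i - 1) j + etaCoef ζ i (j - 1)
      + (ζ ^ 2 - 1) * u * v * etaCoef ζ (i - 1) (j - 1))

theorem coeff_coeff_hfourGeomPoly (ζ u v : ℂ) {N a : ℕ} (ha : a < N) (b : ℕ) :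
    ((hfourGeomPoly ζ u v N).coeff b).coeff a = hfourCoef ζ u v a b := by
  have hsum : hfourGeomPoly ζ u v N
      = C (C (3 + ζ ^ 2 + (ζ ^ 2 - 1) * (u + v))) * (C X ^ 0 * Y ^ 0 * geomPoly ζ N)
        + C (C (ζ ^ 2 - 1)) * (C X ^ 1 * Y ^ 0 * geomPoly ζ N + C X ^ 0 * Y ^ 1 * geomPoly ζ N)
        + C (C ((ζ ^ 2 - 1) ^ 2 * u * v)) * (C X ^ 1 * Y ^ 1 * geomPoly ζ N) := by
    rw [hfourGeomPoly]
    ring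
  simp only [hsum, coeff_add, coeff_C_mul, coeff_coeff_monomial_mul_geomPoly ζ ha,
    Nat.cast_zero, Nat.cast_one, sub_zero, hfourCoef]
  ring

theorem hfour_mul_inv_hpol_sub_evalEval (ζ u v : ℂ) (N : ℕ) {x y : ℂ} (h : hpol ζ x y ≠ 0) :
    hfour ζ u v x y * (hpol ζ x y)⁻¹ - (hfourGeomPoly ζ u v N).evalEval x y
      = (x * y) ^ N * (((ζ ^ 2 - 1) * y + ((ζ ^ 2 - 1) * x + (3 + ζ ^ 2))) ^ N
        * hfour ζ u v x y * (hpol ζ x y)⁻¹) := by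
  have hgeom := hpol_mul_evalEval_geomPoly ζ N x y
  rw [mul_pow] at hgeom
  have heval : (hfourGeomPoly ζ u v N).evalEval x y
      = hfour ζ u v x y * (geomPoly ζ N).evalEval x y := by
    simp only [hfourGeomPoly, hfour, evalEval_mul, evalEval_add, evalEval_C,
      evalEval_X, eval_X, eval_C]
  rw [heval]
  field_simp
  linear_combination -hfour ζ u v x y * hgeom

theorem isLittleO_hfour_mul_inv_hpol_sub_evalEval (ζ u v : ℂ) (m : ℕ) :
    (fun z : ℂ × ℂ => hfour ζ u v z.1 z.2 * (hpol ζ z.1 z.2)⁻¹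
        - (hfourGeomPoly ζ u v (m + 1)).evalEval z.1 z.2) =o[𝓝 0] fun z => ‖z‖ ^ (2 * m) := by
  have hcont : Continuous fun z : ℂ × ℂ => hpol ζ z.1 z.2 := by
    unfold hpol
    fun_prop
  have hne : hpol ζ (0 : ℂ × ℂ).1 (0 : ℂ × ℂ).2 ≠ 0 := by simp [hpol]
  have hbounded : (fun z : ℂ × ℂ =>
      ((ζ ^ 2 - 1) * z.2 + ((ζ ^ 2 - 1) * z.1 + (3 + ζ ^ 2))) ^ (m + 1)
        * hfour ζ u v z.1 z.2 * (hpol ζ z.1 z.2)⁻¹) =O[𝓝 0] fun _ => (1 : ℝ) := by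
    refine (ContinuousAt.mul ?_ (hcont.continuousAt.inv₀ hne)).isBigO_one ℝ
    unfold hfour
    fun_prop
  have hxy : (fun z : ℂ × ℂ => (z.1 * z.2) ^ (m + 1)) =o[𝓝 0] fun z => ‖z‖ ^ (2 * m) := by
    have hO : (fun z : ℂ × ℂ => z.1 * z.2) =O[𝓝 0] fun z => ‖z‖ * ‖z‖ :=
      isBigO_fst_prod'.norm_right.mul isBigO_snd_prod'.norm_right
    refine (hO.pow (m + 1)).trans_isLittleO ?_
    simpa only [← pow_two, ← pow_mul] using
      isLittleO_norm_pow_norm_pow (E' := ℂ × ℂ) (show 2 * m < 2 * (m + 1) by omega)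
  refine (hxy.mul_isBigO hbounded).congr' ?_ (.of_forall fun z => mul_one _)
  filter_upwards [hcont.continuousAt.eventually_ne hne] with z hz
  exact (hfour_mul_inv_hpol_sub_evalEval ζ u v (m + 1) hz).symm

end GeometricSeries

section Condensation

open Matrix Filter Topology

variable {m : ℕ}

/-- The determinant ratio defining `H_{2k}`, with the two halves of the variables separated. -/
def splitRatio (ζ : ℂ) (x y : Fin m → ℂ) : ℂ :=
  (∏ i, ∏ j, hpol ζ (x i) (y j)) * detRatio (fun a b => (hpol ζ a b)⁻¹) x y

/-- The determinant ratio left after eliminating the variables `u` and `v`: the function `1 / h`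
is replaced by `H₄(u, v, ·, ·) / h`. -/
def condensedRatio (ζ u v : ℂ) (x y : Fin m → ℂ) : ℂ :=
  (∏ i, ∏ j, hpol ζ (x i) (y j)) * detRatio (fun a b => hfour ζ u v a b * (hpol ζ a b)⁻¹) x y

/-- The condition under which the fractions in `splitRatio` have no vanishing denominator. -/
structure IsGeneric (ζ : ℂ) (x y : Fin m → ℂ) : Prop where
  injective_left : Function.Injective x
  injective_right : Function.Injective y
  hpol_ne_zero : ∀ i j, hpol ζ (x i) (y j) ≠ 0

theorem IsGeneric.comp_perm {ζ : ℂ} {x y : Fin m → ℂ} (h : IsGeneric ζ x y)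
    (σ : Equiv.Perm (Fin m)) : IsGeneric ζ (x ∘ σ) y :=
  ⟨h.injective_left.comp σ.injective, h.injective_right, fun i j => h.hpol_ne_zero (σ i) j⟩

theorem splitRatio_comp_perm (ζ : ℂ) (σ : Equiv.Perm (Fin m)) (x y : Fin m → ℂ) :
    splitRatio ζ (x ∘ σ) y = splitRatio ζ x y := by
  rw [splitRatio, splitRatio, detRatio_comp_perm]
  exact congrArg (· * _) (Equiv.prod_comp σ fun i => ∏ j, hpol ζ (x i) (y j))

theorem inv_hpol_sub {ζ u v x y : ℂ} (huy : hpol ζ u y ≠ 0) (hxv : hpol ζ x v ≠ 0)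
    (hxy : hpol ζ x y ≠ 0) :
    (hpol ζ x y)⁻¹ - (hpol ζ x v)⁻¹ / (hpol ζ u v)⁻¹ * (hpol ζ u y)⁻¹
      = (x - u) * (hpol ζ x v)⁻¹
        * ((y - v) * (hpol ζ u y)⁻¹ * (hfour ζ u v x y * (hpol ζ x y)⁻¹)) := by
  field_simp
  simp only [hpol, hfour]
  ring

theorem splitRatio_vecCons_eq_condensedRatio {ζ u v : ℂ} {x y : Fin m → ℂ}
    (h : IsGeneric ζ (vecCons u x) (vecCons v y)) :
    splitRatio ζ (vecCons u x) (vecCons v y) = condensedRatio ζ u v x y := by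
  have huv : hpol ζ u v ≠ 0 := h.hpol_ne_zero 0 0
  have huy : ∀ j, hpol ζ u (y j) ≠ 0 := fun j => h.hpol_ne_zero 0 j.succ
  have hxv : ∀ i, hpol ζ (x i) v ≠ 0 := fun i => h.hpol_ne_zero i.succ 0
  have hxy : ∀ i j, hpol ζ (x i) (y j) ≠ 0 := fun i j => h.hpol_ne_zero i.succ j.succ
  have hx : ∀ i, x i ≠ u := fun i => h.injective_left.ne (Fin.succ_ne_zero i)
  have hy : ∀ j, y j ≠ v := fun j => h.injective_right.ne (Fin.succ_ne_zero j)
  have huy_prod : ∏ j, hpol ζ u (y j) ≠ 0 := Finset.prod_ne_zero_iff.mpr fun j _ => huy j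
  have hxv_prod : ∏ i, hpol ζ (x i) v ≠ 0 := Finset.prod_ne_zero_iff.mpr fun i _ => hxv i
  rw [splitRatio, condensedRatio, detRatio_vecCons (inv_ne_zero huv) hx hy
    (a := fun i => (hpol ζ (x i) v)⁻¹) (b := fun j => (hpol ζ u (y j))⁻¹)
    (g := fun a b => hfour ζ u v a b * (hpol ζ a b)⁻¹)
    fun i j => inv_hpol_sub (huy j) (hxv i) (hxy i j)]
  simp only [Fin.prod_univ_succ, cons_val_zero, cons_val_succ, Finset.prod_mul_distrib,
    Finset.prod_inv_distrib]
  field_simp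

theorem condensedRatio_comm (ζ u v : ℂ) (x y : Fin m → ℂ) :
    condensedRatio ζ u v x y = condensedRatio ζ v u x y := by
  have hfour_comm : ∀ a b, hfour ζ u v a b = hfour ζ v u a b := fun a b => by
    simp only [hfour]
    ring
  simp only [condensedRatio, hfour_comm]

theorem splitRatio_vecCons_exchange {ζ u v : ℂ} {x y : Fin m → ℂ}
    (h : IsGeneric ζ (vecCons u x) (vecCons v y)) (h' : IsGeneric ζ (vecCons v x) (vecCons u y)) :
    splitRatio ζ (vecCons u x) (vecCons v y) = splitRatio ζ (vecCons v x) (vecCons u y) := by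
  rw [splitRatio_vecCons_eq_condensedRatio h, condensedRatio_comm,
    splitRatio_vecCons_eq_condensedRatio h']

theorem splitRatio_vecCons_vecCons_eq_condensedRatio {ζ u v z : ℂ} {x : Fin m → ℂ}
    {y : Fin (m + 1) → ℂ}
    (h : IsGeneric ζ (vecCons u (vecCons v x)) (vecCons z y))
    (h' : IsGeneric ζ (vecCons u (vecCons z x)) (vecCons v y)) :
    splitRatio ζ (vecCons u (vecCons v x)) (vecCons z y)
      = condensedRatio ζ u v (vecCons z x) y := by
  have hswap := h.comp_perm (Equiv.swap 0 1)
  have hswap' := h'.comp_perm (Equiv.swap 0 1)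
  rw [cons_cons_comp_swap_zero_one] at hswap hswap'
  rw [← splitRatio_comp_perm ζ (Equiv.swap 0 1), cons_cons_comp_swap_zero_one,
    splitRatio_vecCons_exchange hswap hswap', ← splitRatio_comp_perm ζ (Equiv.swap 0 1),
    cons_cons_comp_swap_zero_one, splitRatio_vecCons_eq_condensedRatio h']

theorem tendsto_condensedRatio (ζ u v : ℂ) {s s' : Fin (m + 1) → ℂ} (hs : Function.Injective s)
    (hs' : Function.Injective s') :
    Tendsto (fun t : ℂ => condensedRatio ζ u v (t • s) (t • s')) (𝓝[≠] 0)
      (𝓝 (det (of fun i j : Fin (m + 1) => hfourCoef ζ u v (i : ℕ) (j : ℕ)))) := by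
  have hprod : Tendsto (fun t : ℂ => ∏ i, ∏ j, hpol ζ ((t • s) i) ((t • s') j)) (𝓝[≠] 0)
      (𝓝 1) := by
    refine Continuous.tendsto' ?_ _ _ (by simp [hpol]) |>.mono_left nhdsWithin_le_nhds
    unfold hpol
    fun_prop
  have hlim := hprod.mul (tendsto_detRatio hs hs'
    (f := fun a b => hfour ζ u v a b * (hpol ζ a b)⁻¹)
    (isLittleO_hfour_mul_inv_hpol_sub_evalEval ζ u v m))
  simpa only [condensedRatio, one_mul, coeff_coeff_hfourGeomPoly ζ u v (Fin.is_lt _)] using hlim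

end Condensation

section Generic

open Matrix Filter Topology

variable {m : ℕ}

theorem eventually_injective_add_smul {𝕜 : Type*} [NormedField 𝕜] {a b : Fin m → 𝕜}
    (h : Function.Injective fun i => (a i, b i)) :
    ∀ᶠ t in 𝓝[≠] (0 : 𝕜), Function.Injective (a + t • b) := by
  have hpair : ∀ i j, ∀ᶠ t in 𝓝[≠] (0 : 𝕜), a i + t * b i = a j + t * b j → i = j := by
    intro i j
    by_cases ha : a i = a j
    · filter_upwards [self_mem_nhdsWithin] with t ht heq
      rw [ha] at heq
      exact h (Prod.ext ha (mul_left_cancel₀ ht (add_left_cancel heq)))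
    · have hcont : Continuous fun t => a i + t * b i - (a j + t * b j) := by fun_prop
      have hne := hcont.continuousAt.eventually_ne (x := (0 : 𝕜)) (y := 0)
        (by simpa [sub_eq_zero] using ha)
      filter_upwards [hne.filter_mono nhdsWithin_le_nhds] with t ht heq
      exact absurd (sub_eq_zero.mpr heq) ht
  filter_upwards [eventually_all.mpr fun i => eventually_all.mpr (hpair i)] with t ht i j
  exact ht i j

theorem eventually_isGeneric_add_smul {ζ : ℂ} {a b a' b' : Fin m → ℂ}
    (h : Function.Injective fun i => (a i, b i)) (h' : Function.Injective fun i => (a' i, b' i))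
    (hne : ∀ i j, hpol ζ (a i) (a' j) ≠ 0) :
    ∀ᶠ t in 𝓝[≠] (0 : ℂ), IsGeneric ζ (a + t • b) (a' + t • b') := by
  have hev : ∀ i j, ∀ᶠ t in 𝓝[≠] (0 : ℂ), hpol ζ ((a + t • b) i) ((a' + t • b') j) ≠ 0 := by
    intro i j
    have hcont : Continuous fun t : ℂ => hpol ζ ((a + t • b) i) ((a' + t • b') j) := by
      unfold hpol
      fun_prop
    exact (hcont.continuousAt.eventually_ne (by simpa using hne i j)).filter_mono
      nhdsWithin_le_nhds
  filter_upwards [eventually_injective_add_smul h, eventually_injective_add_smul h',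
    eventually_all.mpr fun i => eventually_all.mpr (hev i)] with t ht ht' htne
  exact ⟨ht, ht', htne⟩

theorem eventually_isGeneric_vecCons {ζ u v : ℂ} {s s' : Fin m → ℂ} (huv : hpol ζ u v ≠ 0)
    (hs : Function.Injective s) (hs₀ : ∀ i, s i ≠ 0) (hs' : Function.Injective s')
    (hs'₀ : ∀ i, s' i ≠ 0) :
    ∀ᶠ t in 𝓝[≠] (0 : ℂ), IsGeneric ζ (vecCons u (t • s)) (vecCons v (t • s')) := by
  have hcons : Function.Injective (vecCons 0 s) :=
    Fin.cons_injective_iff.mpr ⟨fun ⟨i, hi⟩ => hs₀ i hi, hs⟩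
  have hcons' : Function.Injective (vecCons 0 s') :=
    Fin.cons_injective_iff.mpr ⟨fun ⟨i, hi⟩ => hs'₀ i hi, hs'⟩
  have hgen := eventually_isGeneric_add_smul (ζ := ζ) (a := vecCons u 0) (a' := vecCons v 0)
    (fun _ _ hij => hcons (Prod.mk.inj hij).2) (fun _ _ hij => hcons' (Prod.mk.inj hij).2)
    (Fin.cases (Fin.cases huv fun j => by simp [hpol]) fun i j => by simp [hpol])
  simpa only [smul_cons, smul_zero, cons_add_cons, add_zero, zero_add] using hgen

theorem eventually_isGeneric_vecCons_vecCons {ζ u v : ℂ} {s : Fin m → ℂ} {s' : Fin (m + 2) → ℂ}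
    (huv : u ≠ v) (hs : Function.Injective s) (hs₀ : ∀ i, s i ≠ 0) (hs' : Function.Injective s') :
    ∀ᶠ t in 𝓝[≠] (0 : ℂ), IsGeneric ζ (vecCons u (vecCons v (t • s))) (t • s') := by
  have hinj : Function.Injective fun i =>
      (vecCons u (vecCons v (0 : Fin m → ℂ)) i, vecCons 0 (vecCons 0 s) i) := by
    have hcons : (fun i => (vecCons u (vecCons v (0 : Fin m → ℂ)) i, vecCons 0 (vecCons 0 s) i))
        = Fin.cons (u, 0) (Fin.cons (v, 0) fun i => (0, s i)) :=
      funext (Fin.cases rfl (Fin.cases rfl fun _ => rfl))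
    rw [hcons, Fin.cons_injective_iff, Fin.cons_injective_iff, Fin.range_cons]
    refine ⟨?_, fun ⟨i, hi⟩ => hs₀ i (Prod.mk.inj hi).2, fun i j hij => hs (Prod.mk.inj hij).2⟩
    rintro (hv | ⟨i, hi⟩)
    · exact huv (Prod.mk.inj hv).1
    · exact hs₀ i (Prod.mk.inj hi).2
  have hgen := eventually_isGeneric_add_smul (ζ := ζ) (a' := 0) hinj
    (fun _ _ hij => hs' (Prod.mk.inj hij).2) (by simp [hpol])
  simpa only [smul_cons, smul_zero, cons_add_cons, add_zero, zero_add] using hgen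

end Generic

section Halves

open Matrix

variable {k : ℕ}

/-- The `2k`-tuple with prescribed first and second half. -/
def joinHalves (x y : Fin k → ℂ) : Fin (2 * k) → ℂ :=
  Fin.append x y ∘ Fin.cast (two_mul k)

theorem firstHalf_joinHalves (x y : Fin k → ℂ) : firstHalf (joinHalves x y) = x :=
  funext fun i => Fin.append_left x y i

theorem secondHalf_joinHalves (x y : Fin k → ℂ) : secondHalf (joinHalves x y) = y :=
  funext fun i => Fin.append_right x y i

theorem joinHalves_firstHalf_secondHalf (x : Fin (2 * k) → ℂ) :
    joinHalves (firstHalf x) (secondHalf x) = x := by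
  have happend : Fin.append (firstHalf x) (secondHalf x) = x ∘ Fin.cast (two_mul k).symm := by
    ext i
    refine Fin.addCases (fun i => ?_) (fun i => ?_) i
    · exact Fin.append_left _ _ i
    · exact Fin.append_right _ _ i
  rw [joinHalves, happend]
  rfl

theorem padded_pair_eq_joinHalves (w w' : ℂ) :
    padded [w, w'] = joinHalves (vecCons w (vecCons w' (0 : Fin k → ℂ))) 0 := by
  rw [← joinHalves_firstHalf_secondHalf (padded [w, w'])]
  congr 1
  · ext i
    refine Fin.cases rfl (fun i => Fin.cases rfl (fun i => rfl) i) i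
  · ext i
    exact List.getD_eq_default _ _ (by simp; omega)

theorem continuous_joinHalves :
    Continuous fun p : (Fin k → ℂ) × (Fin k → ℂ) => joinHalves p.1 p.2 :=
  (Pi.continuous_precomp _).comp (Fin.continuous_append k k)

theorem continuous_padded_pair (w : ℂ) :
    Continuous fun w' : ℂ => (padded [w, w'] : Fin (2 * (k + 2)) → ℂ) := by
  have hhalf : Continuous fun w' : ℂ => vecCons w (vecCons w' (0 : Fin k → ℂ)) := by fun_prop
  simp only [padded_pair_eq_joinHalves]
  exact continuous_joinHalves.comp (hhalf.prodMk continuous_const)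

end Halves

section Main

open Matrix Filter Topology

variable {ζ : ℂ} {H : (k : ℕ) → (Fin (2 * k) → ℂ) → ℂ} {k : ℕ}

theorem vdm_eq_det_vandermonde {m : ℕ} (x : Fin m → ℂ) :
    vdm x = (vandermonde x).det := by
  rw [det_vandermonde, vdm]
  refine Finset.prod_congr rfl fun i _ => ?_
  rw [← Finset.prod_filter]
  exact Finset.prod_congr (by ext j; simp) fun _ _ => rfl

theorem IsHFamily.apply_joinHalves (hH : IsHFamily ζ H) {x y : Fin k → ℂ}
    (h : IsGeneric ζ x y) : H k (joinHalves x y) = splitRatio ζ x y := by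
  have hdef : HratioDefined ζ k (joinHalves x y) := by
    rw [HratioDefined, firstHalf_joinHalves, secondHalf_joinHalves]
    exact ⟨fun _ _ => h.injective_left.ne, fun _ _ => h.injective_right.ne, h.hpol_ne_zero⟩
  rw [hH.2.2 k _ hdef, Hratio, firstHalf_joinHalves, secondHalf_joinHalves,
    vdm_eq_det_vandermonde, vdm_eq_det_vandermonde, splitRatio, detRatio, div_mul_eq_mul_div,
    mul_div_assoc]

theorem IsHFamily.continuous (hH : IsHFamily ζ H) (k : ℕ) : Continuous (H k) := by
  obtain ⟨P, hP⟩ := hH.2.1 k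
  rw [funext hP]
  exact MvPolynomial.continuous_eval P

theorem IsHFamily.eventually_apply_joinHalves_eq_condensedRatio (hH : IsHFamily ζ H) {w w' : ℂ}
    (hne : w ≠ w') (hpol_ne : hpol ζ w w' ≠ 0) {z : ℂ} {r : Fin k → ℂ} {s : Fin (k + 1) → ℂ}
    (hr : Function.Injective (vecCons z r)) (hr₀ : ∀ i, vecCons z r i ≠ 0)
    (hs : Function.Injective (vecCons z s)) (hs₀ : ∀ j, s j ≠ 0) :
    ∀ᶠ t : ℂ in 𝓝[≠] 0,
      H (k + 2) (joinHalves (vecCons w (vecCons w' (t • r))) (t • vecCons z s))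
        = condensedRatio ζ w w' (t • vecCons z r) (t • s) := by
  filter_upwards [
    eventually_isGeneric_vecCons_vecCons hne (Fin.cons_injective_iff.mp hr).2
      (fun i => hr₀ i.succ) hs,
    eventually_isGeneric_vecCons hpol_ne hr hr₀ (Fin.cons_injective_iff.mp hs).2 hs₀] with t ht ht'
  rw [smul_cons] at ht ht' ⊢
  rw [smul_cons, hH.apply_joinHalves ht, splitRatio_vecCons_vecCons_eq_condensedRatio ht ht']

theorem IsHFamily.tendsto_apply_joinHalves (hH : IsHFamily ζ H) (w w' : ℂ) (r : Fin k → ℂ)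
    (s : Fin (k + 2) → ℂ) :
    Tendsto (fun t : ℂ => H (k + 2) (joinHalves (vecCons w (vecCons w' (t • r))) (t • s))) (𝓝[≠] 0)
      (𝓝 (H (k + 2) (padded [w, w']))) := by
  have hcurve : Continuous fun t : ℂ => (vecCons w (vecCons w' (t • r)), t • s) := by fun_prop
  refine ((hH.continuous (k + 2)).comp (continuous_joinHalves.comp hcurve)).tendsto' 0 _ ?_
    |>.mono_left nhdsWithin_le_nhds
  simp only [Function.comp_apply, zero_smul, padded_pair_eq_joinHalves]

theorem IsHFamily.apply_padded_pair_of_ne (hH : IsHFamily ζ H) {w w' : ℂ} (hne : w ≠ w')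
    (hpol_ne : hpol ζ w w' ≠ 0) :
    H (k + 2) (padded [w, w'])
      = det (of fun i j : Fin (k + 1) => hfourCoef ζ w w' (i : ℕ) (j : ℕ)) := by
  let node : ℕ → ℂ := fun n => n + 1
  have hnode : Function.Injective node := (add_left_injective 1).comp Nat.cast_injective
  have hnode₀ : ∀ n, node n ≠ 0 := Nat.cast_add_one_ne_zero
  let nodes (n : ℕ) : Fin n → ℂ := fun i => node (i + 1)
  have hcons : ∀ n, vecCons (node 0) (nodes n) = fun i : Fin (n + 1) => node i := fun n =>
    funext (Fin.cases rfl fun _ => rfl)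
  have hinj : ∀ n, Function.Injective (vecCons (node 0) (nodes n)) := fun n =>
    hcons n ▸ hnode.comp Fin.val_injective
  have hinj_tail : Function.Injective (nodes (k + 1)) :=
    (Fin.cons_injective_iff.mp (hinj (k + 1))).2
  have heq := hH.eventually_apply_joinHalves_eq_condensedRatio hne hpol_ne (hinj k)
    (fun i => hcons k ▸ hnode₀ i) (hinj (k + 1)) fun j => hnode₀ (j + 1)
  exact tendsto_nhds_unique ((hH.tendsto_apply_joinHalves w w' _ _).congr' heq)
    (tendsto_condensedRatio ζ w w' (hinj k) hinj_tail)

theorem dense_setOf_ne_and_hpol_ne_zero (ζ w : ℂ) : Dense {w' | w ≠ w' ∧ hpol ζ w w' ≠ 0} := by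
  open Polynomial in
  let P : ℂ[X] := 1 - C ((3 + ζ ^ 2) * w) * X + C ((1 - ζ ^ 2) * w) * X * (C w + X)
  have hP : ∀ w', P.eval w' = hpol ζ w w' := fun w' => by simp [P, hpol]
  have hP₀ : P ≠ 0 := fun h => by simpa [h, hpol] using hP 0
  have hfin : ({w} ∪ {w' | P.IsRoot w'}).Finite :=
    (Set.finite_singleton w).union (Polynomial.finite_setOfPred_isRoot hP₀)
  refine (hfin.countable.dense_compl ℂ).mono fun w' hw' => ?_
  simpa [hP, eq_comm] using hw'

end Main

theorem stmt3 (ζ : ℂ) (H : (k : ℕ) → (Fin (2*k) → ℂ) → ℂ) (hH : IsHFamily ζ H)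
    (k : ℕ) (w w' : ℂ) :
    H (k+2) (padded [w, w'])
      = Matrix.det (Matrix.of fun i j : Fin (k+1) =>
          (3 + ζ^2 + (ζ^2 - 1)*(w + w')) * etaCoef ζ ((i:ℕ):ℤ) ((j:ℕ):ℤ)
          + (ζ^2 - 1) * (etaCoef ζ (((i:ℕ):ℤ) - 1) ((j:ℕ):ℤ)
              + etaCoef ζ ((i:ℕ):ℤ) (((j:ℕ):ℤ) - 1)
              + (ζ^2 - 1) * w * w' * etaCoef ζ (((i:ℕ):ℤ) - 1) (((j:ℕ):ℤ) - 1))) := by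
  revert w'
  refine congrFun (Continuous.ext_on (dense_setOf_ne_and_hpol_ne_zero ζ w) ?_ ?_
    fun w' hw' => hH.apply_padded_pair_of_ne hw'.1 hw'.2)
  · exact (hH.continuous (k + 2)).comp (continuous_padded_pair w)
  · refine Continuous.matrix_det (continuous_matrix fun i j => ?_)
    simp only [Matrix.of_apply]
    fun_prop

end
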